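/- Let v ≥ 2 be real. For every real z with z > 2√(v-1) and z ≠ v, ∫_{-2√(v-1)}^{2√(v-1)} (1/(z-x)) · v√(4(v-1)-x²)/(2π(v²-x²)) dx = ((v-2)z - v√(z² - 4(v-1)))/(2(v²-z²)). -/

import Mathlib

open Real

/-!
Partial fractions in `x` write the Kesten–McKay integrand as a combination of
`√(R² - x²) / (a - x)` for `a = z, v, -v`, where `R = 2√(v - 1)`. Each of these is a Cauchy
transform of a semicircle, which has an elementary primitive. The poles `±v` of the density
contribute no square root because `v² - R² = (v - 2)²`.
-/

open Set MeasureTheory intervalIntegral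

section SemicirclePrimitive

theorem hasDerivAt_arcsin_comp_of_sq_add_sq {f : ℝ → ℝ} {f' s x : ℝ} (hf : HasDerivAt f f' x)
    (hs : 0 < s) (hfs : f x ^ 2 + s ^ 2 = 1) :
    HasDerivAt (fun y => arcsin (f y)) (f' / s) x := by
  have hsqrt : √(1 - f x ^ 2) = s := by
    rw [show 1 - f x ^ 2 = s ^ 2 by linarith, sqrt_sq hs.le]
  have h := (hasDerivAt_arcsin (x := f x) (by nlinarith) (by nlinarith)).comp x hf
  rw [hsqrt, one_div_mul_eq_div] at h
  exact h

variable {R a x : ℝ}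

theorem sq_sub_sq_pos_of_mem_Ioo (hx : x ∈ Ioo (-R) R) : 0 < R ^ 2 - x ^ 2 :=
  sub_pos.2 (sq_lt_sq' hx.1 hx.2)

theorem hasDerivAt_arcsin_div (hx : x ∈ Ioo (-R) R) :
    HasDerivAt (fun y => arcsin (y / R)) (1 / √(R ^ 2 - x ^ 2)) x := by
  have hR : 0 < R := by linarith [hx.1, hx.2]
  have hE := sq_sub_sq_pos_of_mem_Ioo hx
  have : 0 < √(R ^ 2 - x ^ 2) := sqrt_pos.2 hE
  have hunit : (x / R) ^ 2 + (√(R ^ 2 - x ^ 2) / R) ^ 2 = 1 := by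
    rw [div_pow, div_pow, sq_sqrt hE.le]
    field_simp
    ring
  refine (hasDerivAt_arcsin_comp_of_sq_add_sq ((hasDerivAt_id x).div_const R)
    (by positivity) hunit).congr_deriv ?_
  field_simp

theorem hasDerivAt_sqrt_sq_sub_sq (hx : x ∈ Ioo (-R) R) :
    HasDerivAt (fun y => √(R ^ 2 - y ^ 2)) (-x / √(R ^ 2 - x ^ 2)) x := by
  have h := ((hasDerivAt_pow 2 x).const_sub (R ^ 2)).sqrt (sq_sub_sq_pos_of_mem_Ioo hx).ne'
  refine h.congr_deriv ?_
  field_simp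
  norm_num

-- The Möbius map `y ↦ (a y - R²) / (R (a - y))` carries `(-R, R)` increasingly onto `(-1, 1)`.
theorem hasDerivAt_arcsin_moebius (ha : R < a) (hx : x ∈ Ioo (-R) R) :
    HasDerivAt (fun y => arcsin ((a * y - R ^ 2) / (R * (a - y))))
      (√(a ^ 2 - R ^ 2) / ((a - x) * √(R ^ 2 - x ^ 2))) x := by
  have hR : 0 < R := by linarith [hx.1, hx.2]
  have hax : 0 < a - x := by linarith [hx.2]
  have hD : 0 < a ^ 2 - R ^ 2 := by nlinarith
  have hE := sq_sub_sq_pos_of_mem_Ioo hx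
  have : 0 < √(a ^ 2 - R ^ 2) := sqrt_pos.2 hD
  have : 0 < √(R ^ 2 - x ^ 2) := sqrt_pos.2 hE
  have hmoebius : HasDerivAt (fun y => (a * y - R ^ 2) / (R * (a - y)))
      (√(a ^ 2 - R ^ 2) ^ 2 / (R * (a - x) ^ 2)) x := by
    have h := (((hasDerivAt_id x).const_mul a).sub_const (R ^ 2)).div
      (((hasDerivAt_id x).const_sub a).const_mul R) (mul_pos hR hax).ne'
    refine h.congr_deriv ?_
    rw [sq_sqrt hD.le]
    simp only [id]
    field_simp
    ring
  have hunit : ((a * x - R ^ 2) / (R * (a - x))) ^ 2 +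
      (√(a ^ 2 - R ^ 2) * √(R ^ 2 - x ^ 2) / (R * (a - x))) ^ 2 = 1 := by
    rw [div_pow, div_pow, mul_pow √_, sq_sqrt hD.le, sq_sqrt hE.le]
    field_simp
    ring
  refine (hasDerivAt_arcsin_comp_of_sq_add_sq hmoebius (by positivity) hunit).congr_deriv ?_
  field_simp

/-- A primitive on `[-R, R]` of the Cauchy kernel at `a ≥ R` against the unnormalised semicircle
density of radius `R`. At `a = R` the argument of the second `arcsin` is singular at the right
end point, but its coefficient vanishes. -/
noncomputable def semicirclePrimitive (R a x : ℝ) : ℝ :=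
  a * arcsin (x / R) - √(R ^ 2 - x ^ 2) -
    √(a ^ 2 - R ^ 2) * arcsin ((a * x - R ^ 2) / (R * (a - x)))

theorem hasDerivAt_semicirclePrimitive (ha : R ≤ a) (hx : x ∈ Ioo (-R) R) :
    HasDerivAt (semicirclePrimitive R a) (√(R ^ 2 - x ^ 2) / (a - x)) x := by
  have hax : 0 < a - x := by linarith [hx.2]
  have hE := sq_sub_sq_pos_of_mem_Ioo hx
  have : 0 < √(R ^ 2 - x ^ 2) := sqrt_pos.2 hE
  have hmoebius : HasDerivAt
      (fun y => √(a ^ 2 - R ^ 2) * arcsin ((a * y - R ^ 2) / (R * (a - y))))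
      ((a ^ 2 - R ^ 2) / ((a - x) * √(R ^ 2 - x ^ 2))) x := by
    rcases ha.eq_or_lt with rfl | ha
    · simpa using hasDerivAt_const x (0 : ℝ)
    · refine ((hasDerivAt_arcsin_moebius ha hx).const_mul _).congr_deriv ?_
      have hR : 0 < R := by linarith [hx.1, hx.2]
      rw [← mul_div_assoc, mul_self_sqrt (by nlinarith)]
  refine ((((hasDerivAt_arcsin_div hx).const_mul a).sub
    (hasDerivAt_sqrt_sq_sub_sq hx)).sub hmoebius).congr_deriv ?_
  field_simp
  rw [sq_sqrt hE.le]
  ring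

theorem continuousOn_semicirclePrimitive (hR : 0 < R) (ha : R ≤ a) :
    ContinuousOn (semicirclePrimitive R a) (Icc (-R) R) := by
  have hmoebius : ContinuousOn
      (fun y => √(a ^ 2 - R ^ 2) * arcsin ((a * y - R ^ 2) / (R * (a - y)))) (Icc (-R) R) := by
    rcases ha.eq_or_lt with rfl | ha
    · simpa using continuousOn_const
    · refine continuousOn_const.mul (continuous_arcsin.comp_continuousOn
        (ContinuousOn.div (by fun_prop) (by fun_prop) fun y hy => ?_))
      have : 0 < a - y := by linarith [hy.2]
      positivity
  exact ((continuous_const.mul (continuous_arcsin.comp (by fun_prop))).sub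
    (by fun_prop)).continuousOn.sub hmoebius

theorem semicirclePrimitive_right (hR : 0 < R) (ha : R ≤ a) :
    semicirclePrimitive R a R = π / 2 * (a - √(a ^ 2 - R ^ 2)) := by
  rcases ha.eq_or_lt with rfl | ha
  · simp [semicirclePrimitive, hR.ne', mul_comm]
  · have hone : (a * R - R ^ 2) / (R * (a - R)) = 1 := by
      have : a - R ≠ 0 := by linarith
      field_simp
    rw [semicirclePrimitive, hone, div_self hR.ne', arcsin_one, sub_self, sqrt_zero]
    ring

theorem semicirclePrimitive_left (hR : 0 < R) (ha : R ≤ a) :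
    semicirclePrimitive R a (-R) = -(π / 2 * (a - √(a ^ 2 - R ^ 2))) := by
  have hneg_one : (a * -R - R ^ 2) / (R * (a - -R)) = -1 := by
    have : a - -R ≠ 0 := by linarith
    field_simp
    ring
  rw [semicirclePrimitive, hneg_one, neg_div, div_self hR.ne', arcsin_neg_one, neg_sq, sub_self,
    sqrt_zero]
  ring

end SemicirclePrimitive

section SemicircleCauchyTransform

variable {R a : ℝ}

theorem intervalIntegrable_sqrt_div_sub (hR : 0 < R) (ha : R ≤ a) :
    IntervalIntegrable (fun x => √(R ^ 2 - x ^ 2) / (a - x)) volume (-R) R := by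
  rw [intervalIntegrable_iff_integrableOn_Ioc_of_le (by linarith)]
  exact integrableOn_deriv_of_nonneg (continuousOn_semicirclePrimitive hR ha)
    (fun x hx => hasDerivAt_semicirclePrimitive ha hx)
    fun x hx => div_nonneg (sqrt_nonneg _) (by linarith [hx.2])

theorem integral_sqrt_div_sub (hR : 0 < R) (ha : R ≤ a) :
    ∫ x in (-R)..R, √(R ^ 2 - x ^ 2) / (a - x) = π * (a - √(a ^ 2 - R ^ 2)) := by
  rw [integral_eq_sub_of_hasDerivAt_of_le (by linarith) (continuousOn_semicirclePrimitive hR ha)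
    (fun x hx => hasDerivAt_semicirclePrimitive ha hx) (intervalIntegrable_sqrt_div_sub hR ha),
    semicirclePrimitive_right hR ha, semicirclePrimitive_left hR ha]
  ring

theorem intervalIntegrable_sqrt_div_add (hR : 0 < R) (ha : R ≤ a) :
    IntervalIntegrable (fun x => √(R ^ 2 - x ^ 2) / (a + x)) volume (-R) R := by
  simpa using ((IntervalIntegrable.iff_comp_neg).1 (intervalIntegrable_sqrt_div_sub hR ha)).symm

theorem integral_sqrt_div_add (hR : 0 < R) (ha : R ≤ a) :
    ∫ x in (-R)..R, √(R ^ 2 - x ^ 2) / (a + x) = π * (a - √(a ^ 2 - R ^ 2)) := by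
  calc
    _ = ∫ x in (-R)..R, √(R ^ 2 - (-x) ^ 2) / (a - -x) := by
      simp only [neg_sq, sub_neg_eq_add]
    _ = ∫ x in (-R)..R, √(R ^ 2 - x ^ 2) / (a - x) := by
      rw [integral_comp_neg fun x => √(R ^ 2 - x ^ 2) / (a - x), neg_neg]
    _ = _ := integral_sqrt_div_sub hR ha

end SemicircleCauchyTransform

theorem div_sub_mul_sq_sub_sq_eq_partial_fractions {K : Type*} [Field K] [NeZero (2 : K)]
    {c w x z : K} (hw : w ≠ 0) (hzw : z ≠ w) (hzw' : z + w ≠ 0) (hzx : z ≠ x) (hwx : w ≠ x)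
    (hwx' : w + x ≠ 0) :
    c / ((z - x) * (w ^ 2 - x ^ 2)) =
      1 / (w ^ 2 - z ^ 2) * (c / (z - x)) + 1 / (2 * w * (z - w)) * (c / (w - x)) +
        1 / (2 * w * (z + w)) * (c / (w + x)) := by
  have hzw_sub : z - w ≠ 0 := sub_ne_zero.2 hzw
  have hzx_sub : z - x ≠ 0 := sub_ne_zero.2 hzx
  have hwx_sub : w - x ≠ 0 := sub_ne_zero.2 hwx
  have htwo : (2 : K) ≠ 0 := NeZero.ne 2
  rw [show w ^ 2 - x ^ 2 = (w - x) * (w + x) by ring,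
    show w ^ 2 - z ^ 2 = -((z - w) * (z + w)) by ring]
  field_simp
  ring

theorem integral_sqrt_div_sub_mul_sq_sub_sq {R w z : ℝ} (hR : 0 < R) (hw : R ≤ w) (hz : R ≤ z)
    (hzw : z ≠ w) :
    ∫ x in (-R)..R, √(R ^ 2 - x ^ 2) / ((z - x) * (w ^ 2 - x ^ 2)) =
      π * (z * √(w ^ 2 - R ^ 2) - w * √(z ^ 2 - R ^ 2)) / (w * (w ^ 2 - z ^ 2)) := by
  have hw₀ : w ≠ 0 := by linarith
  have hsub : z - w ≠ 0 := sub_ne_zero.2 hzw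
  have hadd : z + w ≠ 0 := by linarith
  have hpf : EqOn (fun x => √(R ^ 2 - x ^ 2) / ((z - x) * (w ^ 2 - x ^ 2)))
      (fun x => 1 / (w ^ 2 - z ^ 2) * (√(R ^ 2 - x ^ 2) / (z - x)) +
        1 / (2 * w * (z - w)) * (√(R ^ 2 - x ^ 2) / (w - x)) +
        1 / (2 * w * (z + w)) * (√(R ^ 2 - x ^ 2) / (w + x))) (Ioo (-R) R) := fun x hx =>
    div_sub_mul_sq_sub_sq_eq_partial_fractions hw₀ hzw hadd (by linarith [hx.2])
      (by linarith [hx.2]) (by linarith [hx.1])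
  have hint_z := (intervalIntegrable_sqrt_div_sub hR hz).const_mul (1 / (w ^ 2 - z ^ 2))
  have hint_w := (intervalIntegrable_sqrt_div_sub hR hw).const_mul (1 / (2 * w * (z - w)))
  have hint_neg_w := (intervalIntegrable_sqrt_div_add hR hw).const_mul (1 / (2 * w * (z + w)))
  rw [integral_congr_Ioo_of_le (by linarith) hpf, integral_add (hint_z.add hint_w) hint_neg_w,
    integral_add hint_z hint_w]
  simp only [intervalIntegral.integral_const_mul]
  rw [integral_sqrt_div_sub hR hz, integral_sqrt_div_sub hR hw, integral_sqrt_div_add hR hw,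
    show w ^ 2 - z ^ 2 = -((z - w) * (z + w)) by ring]
  field_simp
  ring

-- For `1 < v < 2` the density has total mass `v - 1` only.
theorem kesten_mckay_cauchy_transform_general {v z : ℝ} (hv : 1 < v)
    (hz : 2 * √(v - 1) ≤ z) (hzv : z ≠ v) :
    ∫ x in (-(2 * √(v - 1)))..(2 * √(v - 1)),
        (1 / (z - x)) * (v * √(4 * (v - 1) - x ^ 2) / (2 * π * (v ^ 2 - x ^ 2)))
      = (|v - 2| * z - v * √(z ^ 2 - 4 * (v - 1))) / (2 * (v ^ 2 - z ^ 2)) := by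
  have hR : 0 < 2 * √(v - 1) := mul_pos two_pos (sqrt_pos.2 (by linarith))
  have hRsq : (2 * √(v - 1)) ^ 2 = 4 * (v - 1) := by
    rw [mul_pow, sq_sqrt (by linarith)]
    norm_num
  have hRv : 2 * √(v - 1) ≤ v := le_of_sq_le_sq (by nlinarith [sq_nonneg (v - 2)]) (by linarith)
  have hvR : √(v ^ 2 - 4 * (v - 1)) = |v - 2| := by
    rw [show v ^ 2 - 4 * (v - 1) = (v - 2) ^ 2 by ring, sqrt_sq_eq_abs]
  have hsemicircle := integral_sqrt_div_sub_mul_sq_sub_sq hR hRv hz hzv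
  rw [hRsq, hvR] at hsemicircle
  calc
    _ = ∫ x in (-(2 * √(v - 1)))..(2 * √(v - 1)),
          v / (2 * π) * (√(4 * (v - 1) - x ^ 2) / ((z - x) * (v ^ 2 - x ^ 2))) := by
      congr 1 with x
      rw [div_mul_div_comm, div_mul_div_comm, one_mul, mul_left_comm]
    _ = _ := by
      rw [intervalIntegral.integral_const_mul, hsemicircle]
      field_simp

/-- The Cauchy transform of the Kesten–McKay law. -/
theorem kesten_mckay_cauchy_transform (v : ℝ) (hv : 2 ≤ v) (z : ℝ)
    (hz : 2 * Real.sqrt (v - 1) < z) (hzv : z ≠ v) :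
    ∫ x in (-(2 * Real.sqrt (v - 1)))..(2 * Real.sqrt (v - 1)),
        (1 / (z - x)) * (v * Real.sqrt (4 * (v - 1) - x ^ 2) / (2 * π * (v ^ 2 - x ^ 2)))
      = ((v - 2) * z - v * Real.sqrt (z ^ 2 - 4 * (v - 1))) / (2 * (v ^ 2 - z ^ 2)) := by
  rw [kesten_mckay_cauchy_transform_general (by linarith) hz.le hzv, abs_of_nonneg (by linarith)]
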